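/- Let W ⊂ P^2 be a line count configuration of type (c_1, c_2, …, c_t) over an algebraically closed field k of characteristic 0, where 1 ≤ c_1 ≤ c_2 ≤ ⋯ ≤ c_t and c_i ≥ i for all 1 ≤ i ≤ t. Then for every integer r ≥ 1, α((2r−1)W) ≥ r·α(W) + (r−1). -/

import Mathlib

open scoped LinearAlgebra.Projectivization

/-- The homogeneous ideal of a point `P` of `ℙ²`: all polynomials vanishing on the
line through the origin corresponding to `P`. -/
noncomputable def pointIdeal (k : Type*) [Field k] (P : ℙ k (Fin 3 → k)) :
    Ideal (MvPolynomial (Fin 3) k) where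
  carrier := {f | ∀ c : k, MvPolynomial.eval (c • P.rep) f = 0}
  zero_mem' := by intro c; simp
  add_mem' := by
    intro a b ha hb c
    simp [ha c, hb c]
  smul_mem' := by
    intro r f hf c
    simp [smul_eq_mul, hf c]

/-- The defining ideal `I_{mW} = ⋂_{P ∈ W} I_P^m` of the fat point scheme `mW`. -/
noncomputable def fatIdeal (k : Type*) [Field k] (W : Finset (ℙ k (Fin 3 → k))) (m : ℕ) :
    Ideal (MvPolynomial (Fin 3) k) :=
  ⨅ P ∈ W, (pointIdeal k P) ^ m

/-- `α(I)`: the least degree `d` such that `I` contains a nonzero homogeneous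
polynomial of degree `d`. -/
noncomputable def alphaDeg (k : Type*) [Field k] (I : Ideal (MvPolynomial (Fin 3) k)) : ℕ :=
  sInf {d : ℕ | ∃ f ∈ I, f ≠ 0 ∧ MvPolynomial.IsHomogeneous f d}

/-!
Let `L` be the last line, with at least `t` points of `W` on it. By Bézout, a form `f` of degree
`d < m * t` with multiplicity `m` at these points vanishes on `L`. Dividing it by the equation of
`L` lowers `d` by one and each multiplicity on `L` by one, so a form of small degree is divisible by
a high power of the equation of `L`. If `f` has multiplicity `2 * r - 1` on `W` and degree less than
`r * t + r - 1`, then `r` copies of `L` split off; the quotient still has multiplicity `2 * r - 1`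
on the other lines and its degree has dropped by `r`, so induction on `t` applies. This bounds
`α((2 * r - 1)W)` below by `r * t + r - 1`, whereas `α(W) ≤ t`: the product of the `t` linear forms
vanishes on `W`.

The base field may be finite, so `f` is shown to vanish on `L` by evaluating it at the generic point
`w` of `L`: for `u ∈ L`, the coefficient of `X ^ d` in `f (u + X w)` is `f w`.
-/

section FatPoints

open MvPolynomial

section LineExpansion

variable {σ R A : Type*} [CommSemiring R] [CommSemiring A] [Algebra R A]

theorem aeval_mul_left_of_isHomogeneous {f : MvPolynomial σ R} {d : ℕ} (hf : f.IsHomogeneous d)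
    (b : A) (v : σ → A) : aeval (fun i => b * v i) f = b ^ d * aeval v f := by
  simp only [aeval_def, eval₂_eq, Finset.mul_sum]
  refine Finset.sum_congr rfl fun s hs => ?_
  rw [hf.degree_eq_sum_deg_support hs]
  simp only [mul_pow, Finset.prod_mul_distrib, Finset.prod_pow_eq_pow_sum]
  ring

theorem aeval_algebraMap_comp_eq_zero {v : σ → R} {f : MvPolynomial σ R} (h : eval v f = 0) :
    aeval (algebraMap R A ∘ v) f = 0 :=
  (aeval_algebraMap_apply A v f).trans <| (congrArg (algebraMap R A) h).trans (map_zero _)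

theorem coeff_prod_of_natDegree_le_sum {ι : Type*} (s : Finset ι) (p : ι → Polynomial A)
    (n : ι → ℕ) (hp : ∀ i ∈ s, (p i).natDegree ≤ n i) :
    (∏ i ∈ s, p i).coeff (∑ i ∈ s, n i) = ∏ i ∈ s, (p i).coeff (n i) := by
  classical
  induction s using Finset.induction_on with
  | empty => simp
  | insert j s hj ih =>
    have hs := fun i hi => hp i (Finset.mem_insert_of_mem hi)
    rw [Finset.prod_insert hj, Finset.sum_insert hj, Finset.prod_insert hj,
      Polynomial.coeff_mul_add_eq_of_natDegree_le (hp j (Finset.mem_insert_self j s))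
        ((Polynomial.natDegree_prod_le _ _).trans (Finset.sum_le_sum hs)), ih hs]

/-- The restriction `f (u + X w)` of a polynomial `f` to the line through `u` in direction `w`, as a
polynomial in the parameter `X`. The coefficients of `u` and `w` may lie in any algebra, so that
generic points and directions are allowed. -/
noncomputable def lineExpansion (u w : σ → A) : MvPolynomial σ R →ₐ[R] Polynomial A :=
  aeval fun i => Polynomial.C (w i) * Polynomial.X + Polynomial.C (u i)

theorem lineExpansion_eq_sum (u w : σ → A) (f : MvPolynomial σ R) :
    lineExpansion u w f = ∑ s ∈ f.support, Polynomial.C (algebraMap R A (f.coeff s)) *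
      ∏ i ∈ s.support, (Polynomial.C (w i) * Polynomial.X + Polynomial.C (u i)) ^ s i := by
  rw [lineExpansion, aeval_def, eval₂_eq]
  rfl

theorem natDegree_linear_pow_le (a b : A) (n : ℕ) :
    ((Polynomial.C a * Polynomial.X + Polynomial.C b) ^ n).natDegree ≤ n := by
  simpa using Polynomial.natDegree_pow_le_of_le n (Polynomial.natDegree_linear_le (a := a) (b := b))

theorem natDegree_lineExpansion_le (u w : σ → A) (f : MvPolynomial σ R) :
    (lineExpansion u w f).natDegree ≤ f.totalDegree := by
  rw [lineExpansion_eq_sum]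
  refine Polynomial.natDegree_sum_le_of_forall_le _ _ fun s hs => ?_
  calc _ ≤ _ := Polynomial.natDegree_C_mul_le _ _
    _ ≤ _ := Polynomial.natDegree_prod_le _ _
    _ ≤ ∑ i ∈ s.support, s i := Finset.sum_le_sum fun i _ => natDegree_linear_pow_le _ _ _
    _ ≤ f.totalDegree := le_totalDegree hs

theorem coeff_zero_lineExpansion (u w : σ → A) (f : MvPolynomial σ R) :
    (lineExpansion u w f).coeff 0 = aeval u f := by
  simp [lineExpansion_eq_sum, aeval_def, eval₂_eq, Polynomial.coeff_zero_eq_eval_zero,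
    Polynomial.eval_finsetSum, Polynomial.eval_prod]

theorem coeff_lineExpansion_of_isHomogeneous (u w : σ → A) {f : MvPolynomial σ R} {d : ℕ}
    (hf : f.IsHomogeneous d) : (lineExpansion u w f).coeff d = aeval w f := by
  rw [lineExpansion_eq_sum, aeval_def, eval₂_eq, Polynomial.finsetSum_coeff]
  refine Finset.sum_congr rfl fun s hs => ?_
  rw [hf.degree_eq_sum_deg_support hs, Polynomial.coeff_C_mul,
    coeff_prod_of_natDegree_le_sum _ _ _ fun i _ => natDegree_linear_pow_le _ _ _]
  refine congrArg _ (Finset.prod_congr rfl fun i _ => ?_)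
  simpa using Polynomial.coeff_pow_of_natDegree_le (m := s i)
    (Polynomial.natDegree_linear_le (a := w i) (b := u i))

theorem lineExpansion_of_isHomogeneous_one (u w : σ → A) {φ : MvPolynomial σ R}
    (hφ : φ.IsHomogeneous 1) :
    lineExpansion u w φ =
      Polynomial.C (aeval w φ) * Polynomial.X + Polynomial.C (aeval u φ) := by
  rw [← coeff_zero_lineExpansion u w, ← coeff_lineExpansion_of_isHomogeneous u w hφ]
  exact Polynomial.eq_X_add_C_of_natDegree_le_one
    ((natDegree_lineExpansion_le u w φ).trans hφ.totalDegree_le)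

/-- The polynomial `f` has multiplicity at least `m` at the vector `v`: its Taylor expansion
`f (v + X Y)` at `v` is divisible by `X ^ m`, where `Y` is the vector of variables of `f`. -/
def VanishesToOrder (v : σ → R) (m : ℕ) (f : MvPolynomial σ R) : Prop :=
  Polynomial.X ^ m ∣ lineExpansion (fun i => C (v i)) X f

theorem aeval_C_comp (v : σ → R) (f : MvPolynomial σ R) :
    aeval (fun i => C (v i)) f = (C (eval v f) : MvPolynomial σ R) :=
  aeval_algebraMap_apply (MvPolynomial σ R) v f

theorem vanishesToOrder_one_iff {v : σ → R} {f : MvPolynomial σ R} :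
    VanishesToOrder v 1 f ↔ eval v f = 0 := by
  rw [VanishesToOrder, pow_one, Polynomial.X_dvd_iff, coeff_zero_lineExpansion, aeval_C_comp,
    C_eq_zero]

theorem vanishesToOrder_of_mem_pow {v : σ → R} {I : Ideal (MvPolynomial σ R)}
    (hI : I ≤ RingHom.ker (eval v)) {m : ℕ} {f : MvPolynomial σ R} (hf : f ∈ I ^ m) :
    VanishesToOrder v m f := by
  have hle : I ≤ (Ideal.span {Polynomial.X}).comap (lineExpansion (fun i => C (v i)) X) :=
    fun g hg => Ideal.mem_span_singleton.2 <| by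
      simpa only [VanishesToOrder, pow_one] using vanishesToOrder_one_iff.2 (hI hg)
  have hmem := Ideal.le_comap_pow _ m (Ideal.pow_right_mono hle m hf)
  rwa [Ideal.mem_comap, Ideal.span_singleton_pow, Ideal.mem_span_singleton] at hmem

namespace VanishesToOrder

variable {v : σ → R} {m : ℕ} {f : MvPolynomial σ R}

theorem le_degree [IsDomain R] {d : ℕ} (h : VanishesToOrder v m f) (hf : f.IsHomogeneous d)
    (hf0 : f ≠ 0) : m ≤ d := by
  have hexp0 : lineExpansion (fun i => C (v i)) X f ≠ 0 := fun h0 => hf0 <| by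
    simpa [h0] using (coeff_lineExpansion_of_isHomogeneous (fun i => C (v i)) X hf).symm
  calc m = (Polynomial.X ^ m : Polynomial (MvPolynomial σ R)).natDegree := by simp
    _ ≤ _ := Polynomial.natDegree_le_of_dvd h hexp0
    _ ≤ f.totalDegree := natDegree_lineExpansion_le _ _ _
    _ ≤ d := hf.totalDegree_le

theorem pow_dvd_aeval (h : VanishesToOrder v m f) (ε : A) (w : σ → A) :
    ε ^ m ∣ aeval (fun i => algebraMap R A (v i) + ε * w i) f := by
  let substitution : Polynomial (MvPolynomial σ R) →ₐ[R] A :=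
    Polynomial.aevalTower (aeval w) ε
  have hcomp : substitution.comp (lineExpansion (fun i => C (v i)) X) =
      aeval fun i => algebraMap R A (v i) + ε * w i := by
    ext i
    simp only [substitution, lineExpansion, AlgHom.comp_apply, aeval_X, map_add, map_mul,
      Polynomial.aevalTower_C, Polynomial.aevalTower_X, aeval_C]
    ring
  have hdvd := map_dvd substitution h
  rw [map_pow, ← AlgHom.comp_apply, hcomp] at hdvd
  simpa [substitution] using hdvd

end VanishesToOrder

end LineExpansion

section CommRing

variable {σ R A : Type*} [CommRing R] [CommRing A] [Algebra R A]

theorem mul_card_le_natDegree [IsDomain A] {p : Polynomial A} (hp : p ≠ 0) {ι : Type*}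
    {s : Finset ι} {a : ι → A} (ha : Set.InjOn a s) {m : ℕ}
    (hdvd : ∀ i ∈ s, (Polynomial.X - Polynomial.C (a i)) ^ m ∣ p) :
    m * s.card ≤ p.natDegree := by
  classical
  have hle : m • (s.image a).val ≤ p.roots := by
    refine Multiset.le_iff_count.2 fun b => ?_
    rw [Multiset.count_nsmul, Polynomial.count_roots]
    by_cases hb : b ∈ s.image a
    · obtain ⟨i, hi, rfl⟩ := Finset.mem_image.1 hb
      rw [Multiset.count_eq_one_of_mem (s.image a).nodup hb, mul_one,
        Polynomial.le_rootMultiplicity_iff hp]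
      exact hdvd i hi
    · rw [Multiset.count_eq_zero_of_notMem hb, mul_zero]
      exact Nat.zero_le _
  calc m * s.card = (m • (s.image a).val).card := by
        rw [Multiset.card_nsmul, Finset.card_val, Finset.card_image_of_injOn ha]
    _ ≤ p.roots.card := Multiset.card_le_card hle
    _ ≤ p.natDegree := p.card_roots'

theorem exists_isHomogeneous_of_mul [IsDomain R] {f g : MvPolynomial σ R} {m d : ℕ}
    (hf : f.IsHomogeneous m) (hfg : f * g ≠ 0) (h : (f * g).IsHomogeneous d) :
    ∃ e, m + e = d ∧ g.IsHomogeneous e := by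
  have hf0 : f ≠ 0 := left_ne_zero_of_mul hfg
  have hdeg : m + g.totalDegree = d := by
    rw [← h.totalDegree hfg, totalDegree_mul_of_isDomain hf0 (right_ne_zero_of_mul hfg),
      hf.totalDegree hf0]
  refine ⟨_, hdeg, ?_⟩
  let _ : GradedAlgebra (homogeneousSubmodule σ R) := gradedAlgebra
  have hcomp := DirectSum.coe_decompose_mul_add_of_left_mem (homogeneousSubmodule σ R)
    (j := g.totalDegree) (b := g) hf
  rw [hdeg, DirectSum.decompose_of_mem_same _ h] at hcomp
  have hmem := (DirectSum.decompose (homogeneousSubmodule σ R) g g.totalDegree).2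
  rwa [← mul_left_cancel₀ hf0 hcomp] at hmem

theorem prime_of_isHomogeneous_one {k : Type*} [Field k] {φ : MvPolynomial σ k}
    (hφ : φ.IsHomogeneous 1) (hφ0 : φ ≠ 0) : Prime φ := by
  refine (irreducible_of_totalDegree_eq_one (hφ.totalDegree hφ0) fun x hx => ?_).prime
  obtain ⟨s, hs⟩ := ne_zero_iff.1 hφ0
  exact (ne_zero_of_dvd_ne_zero hs (hx s)).isUnit

theorem exists_dual_eq_aeval {k K : Type*} [Field k] [Field K] [Algebra k K]
    [Finite σ] {φ : MvPolynomial σ k} (hφ : φ.IsHomogeneous 1) (hφ0 : φ ≠ 0) :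
    ∃ l : Module.Dual K (σ → K), l ≠ 0 ∧ ∀ v, l v = aeval v φ := by
  classical
  have := Fintype.ofFinite σ
  have hspan : φ ∈ homogeneousSubmodule σ k 1 := hφ
  rw [homogeneousSubmodule_one_eq_span_X, Submodule.mem_span_range_iff_exists_fun] at hspan
  obtain ⟨a, rfl⟩ := hspan
  refine ⟨∑ i, a i • LinearMap.proj i, fun hl => hφ0 ?_, fun v => by simp⟩
  have ha : ∀ j, a j = 0 := fun j => by
    simpa [Pi.single_apply, Algebra.smul_def] using LinearMap.congr_fun hl (Pi.single j 1)
  simp [ha]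

namespace VanishesToOrder

variable {v : σ → R} {m d : ℕ} {f g : MvPolynomial σ R}

theorem of_mul_left [IsDomain R] (h : VanishesToOrder v m (g * f)) (hg : eval v g ≠ 0) :
    VanishesToOrder v m f := by
  rw [VanishesToOrder, map_mul] at h
  refine Polynomial.prime_X.pow_dvd_of_dvd_mul_left m (fun hX => hg ?_) h
  rwa [← vanishesToOrder_one_iff, VanishesToOrder, pow_one]

theorem of_linear_mul [IsDomain R] {φ : MvPolynomial σ R} (hφ : φ.IsHomogeneous 1)
    (hφ0 : φ ≠ 0) (hv : eval v φ = 0) (h : VanishesToOrder v (m + 1) (φ * f)) :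
    VanishesToOrder v m f := by
  have hφexp : lineExpansion (fun i => C (v i)) X φ = Polynomial.X * Polynomial.C φ := by
    rw [lineExpansion_of_isHomogeneous_one _ _ hφ, aeval_C_comp, hv, aeval_X_left_apply, C_0,
      Polynomial.C_0, add_zero, mul_comm]
  rw [VanishesToOrder, map_mul, hφexp, pow_succ', mul_assoc,
    mul_dvd_mul_iff_left Polynomial.X_ne_zero] at h
  refine Polynomial.prime_X.pow_dvd_of_dvd_mul_left m ?_ h
  rwa [Polynomial.X_dvd_iff, Polynomial.coeff_C_zero]

theorem X_sub_C_pow_dvd_lineExpansion (h : VanishesToOrder v m f) (hf : f.IsHomogeneous d)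
    {u w : σ → A} {a b : A} (hb : IsUnit b)
    (hv : ∀ i, algebraMap R A (v i) = b * (u i + a * w i)) :
    (Polynomial.X - Polynomial.C a) ^ m ∣ lineExpansion u w f := by
  have hpt : (fun i => algebraMap R (Polynomial A) (v i) +
      (Polynomial.X - Polynomial.C a) * Polynomial.C (b * w i)) =
      fun i => Polynomial.C b * (Polynomial.C (w i) * Polynomial.X + Polynomial.C (u i)) := by
    funext i
    rw [Polynomial.algebraMap_apply, hv]
    simp only [map_mul, map_add]
    ring
  have hdvd := h.pow_dvd_aeval (Polynomial.X - Polynomial.C a) fun i => Polynomial.C (b * w i)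
  rw [hpt, aeval_mul_left_of_isHomogeneous hf] at hdvd
  exact ((Polynomial.isUnit_C.2 hb).pow d).dvd_mul_left.1 hdvd

end VanishesToOrder

end CommRing

section Line

theorem exists_eq_smul_add_smul {K V : Type*} [Field K] [AddCommGroup V] [Module K V]
    {H : Submodule K V} (hH : Module.finrank K H = 2) {u v w : V} (hu : u ∈ H) (hv : v ∈ H)
    (hw : w ∈ H) (hu0 : u ≠ 0) (hv0 : v ≠ 0) (huw : ∀ c : K, c • u ≠ w)
    (hvw : ∀ c : K, c • v ≠ w) : ∃ a b : K, b ≠ 0 ∧ v = b • (u + a • w) := by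
  have hw0 : w ≠ 0 := fun h => huw 0 (by rw [zero_smul, h])
  have hspan := Projectivization.line_unique' hu0 hw0 ((LinearIndependent.pair_iff' hu0).2 huw) H hH
    (by simpa using hu) (by simpa using hw)
  obtain ⟨b, c, rfl⟩ := Submodule.mem_span_pair.1 (hspan ▸ hv)
  have hb : b ≠ 0 := by
    rintro rfl
    rw [zero_smul, zero_add] at hv0 hvw
    exact hvw c⁻¹ (inv_smul_smul₀ (left_ne_zero_of_smul hv0) w)
  exact ⟨b⁻¹ * c, b, hb, by rw [smul_add, smul_smul, mul_inv_cancel_left₀ hb]⟩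

theorem eq_of_algebraMap_rep_eq_smul {σ k K : Type*} [Field k] [Field K] [Algebra k K]
    {P Q : ℙ k (σ → k)} {c : K}
    (h : algebraMap k K ∘ P.rep = c • (algebraMap k K ∘ Q.rep)) : P = Q := by
  obtain ⟨i, hi⟩ := Function.ne_iff.1 Q.rep_nonzero
  have hc : c = algebraMap k K (P.rep i / Q.rep i) := by
    rw [map_div₀, ← Function.comp_apply (f := algebraMap k K) (g := P.rep), h, Pi.smul_apply,
      Function.comp_apply, smul_eq_mul,
      mul_div_cancel_right₀ _ ((map_ne_zero _).2 hi)]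
  rw [← P.mk_rep, ← Q.mk_rep, Projectivization.mk_eq_mk_iff']
  refine ⟨P.rep i / Q.rep i, funext fun j => (algebraMap k K).injective ?_⟩
  simpa [hc] using (congrFun h j).symm

universe u v

theorem dvd_of_forall_aeval_eq_zero {σ : Type u} {k : Type v} [Field k]
    {φ f : MvPolynomial σ k} (hφ : Prime φ)
    (h : ∀ (K : Type (max u v)) [Field K] [Algebra k K] (w : σ → K),
      aeval w φ = 0 → aeval w f = 0) : φ ∣ f := by
  let I := Ideal.span {φ}
  have : I.IsPrime := (Ideal.span_singleton_prime hφ.ne_zero).2 hφ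
  let generic : MvPolynomial σ k →ₐ[k] FractionRing (MvPolynomial σ k ⧸ I) :=
    (Algebra.algHom k _ _).comp (Ideal.Quotient.mkₐ k I)
  have hker : ∀ g, generic g = 0 ↔ φ ∣ g := fun g => by
    rw [← Ideal.mem_span_singleton, ← Ideal.Quotient.eq_zero_iff_mem]
    exact map_eq_zero_iff _ (IsFractionRing.injective (MvPolynomial σ k ⧸ I) _)
  have heval : ∀ g, aeval (generic ∘ X) g = generic g :=
    fun g => (DFunLike.congr_fun (aeval_unique generic) g).symm
  rw [← hker, ← heval]
  exact h _ _ (by rw [heval, hker])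

variable {k : Type u} [Field k] {φ : MvPolynomial (Fin 3) k}

theorem exists_line_parametrization {K : Type*} [Field K] [Algebra k K] (hφ : φ.IsHomogeneous 1)
    (hφ0 : φ ≠ 0) {T : Finset (ℙ k (Fin 3 → k))} (hT : ∀ P ∈ T, eval P.rep φ = 0)
    {w : Fin 3 → K} (hw : aeval w φ = 0)
    (hTw : ∀ P ∈ T, ∀ c : K, c • (algebraMap k K ∘ P.rep) ≠ w) :
    ∃ (u : Fin 3 → K) (a b : ℙ k (Fin 3 → k) → K), Set.InjOn a T ∧
      ∀ P ∈ T, b P ≠ 0 ∧ algebraMap k K ∘ P.rep = b P • (u + a P • w) := by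
  obtain rfl | ⟨P₀, hP₀⟩ := T.eq_empty_or_nonempty
  · exact ⟨0, 0, 0, by simp, by simp⟩
  obtain ⟨l, hl0, hl⟩ := exists_dual_eq_aeval (K := K) hφ hφ0
  have hfinrank : Module.finrank K (LinearMap.ker l) = 2 := by
    have := Module.Dual.finrank_ker_add_one_of_ne_zero hl0
    rw [Module.finrank_fin_fun] at this
    omega
  have hmem : ∀ P ∈ T, algebraMap k K ∘ P.rep ∈ LinearMap.ker l := fun P hP => by
    rw [LinearMap.mem_ker, hl, aeval_algebraMap_comp_eq_zero (hT P hP)]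
  have hrep0 : ∀ P : ℙ k (Fin 3 → k), algebraMap k K ∘ P.rep ≠ 0 := fun P h =>
    P.rep_nonzero (funext fun i => (map_eq_zero _).1 (congrFun h i))
  have hparam : ∀ P ∈ T, ∃ a b : K, b ≠ 0 ∧
      algebraMap k K ∘ P.rep = b • (algebraMap k K ∘ P₀.rep + a • w) := fun P hP =>
    exists_eq_smul_add_smul hfinrank (hmem P₀ hP₀) (hmem P hP)
      (by rwa [LinearMap.mem_ker, hl]) (hrep0 P₀) (hrep0 P) (hTw P₀ hP₀) (hTw P hP)
  choose! a b hb hab using hparam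
  refine ⟨_, a, b, fun P hP Q hQ hPQ => ?_, fun P hP => ⟨hb P hP, hab P hP⟩⟩
  refine eq_of_algebraMap_rep_eq_smul (c := b P * (b Q)⁻¹) ?_
  rw [hab P hP, hab Q hQ, hPQ, mul_smul, inv_smul_smul₀ (hb Q hQ)]

variable {T : Finset (ℙ k (Fin 3 → k))} {f : MvPolynomial (Fin 3) k} {m d : ℕ}

theorem aeval_eq_zero_of_degree_lt {K : Type*} [Field K] [Algebra k K] (hφ : φ.IsHomogeneous 1)
    (hφ0 : φ ≠ 0) (hf : f.IsHomogeneous d) (hT : ∀ P ∈ T, eval P.rep φ = 0)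
    (hfT : ∀ P ∈ T, VanishesToOrder P.rep m f) (hd : d < m * T.card)
    {w : Fin 3 → K} (hw : aeval w φ = 0) : aeval w f = 0 := by
  by_cases hTw : ∀ P ∈ T, ∀ c : K, c • (algebraMap k K ∘ P.rep) ≠ w
  · obtain ⟨u, a, b, ha, hab⟩ := exists_line_parametrization hφ hφ0 hT hw hTw
    by_contra hfw
    have hexp0 : lineExpansion u w f ≠ 0 := fun h => hfw <| by
      rw [← coeff_lineExpansion_of_isHomogeneous u w hf, h, Polynomial.coeff_zero]
    refine hd.not_ge ?_
    calc m * T.card ≤ (lineExpansion u w f).natDegree :=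
          mul_card_le_natDegree hexp0 ha fun P hP =>
            (hfT P hP).X_sub_C_pow_dvd_lineExpansion hf (hab P hP).1.isUnit
              fun i => congrFun (hab P hP).2 i
      _ ≤ f.totalDegree := natDegree_lineExpansion_le u w f
      _ ≤ d := hf.totalDegree_le
  · push Not at hTw
    obtain ⟨P, hP, c, rfl⟩ := hTw
    have hm : m ≠ 0 := by rintro rfl; simp at hd
    have hfP : eval P.rep f = 0 :=
      vanishesToOrder_one_iff.1 ((pow_dvd_pow _ (Nat.one_le_iff_ne_zero.2 hm)).trans (hfT P hP))
    calc aeval (c • (algebraMap k K ∘ P.rep)) f = c ^ d * aeval (algebraMap k K ∘ P.rep) f :=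
          aeval_mul_left_of_isHomogeneous hf c _
      _ = 0 := by rw [aeval_algebraMap_comp_eq_zero hfP, mul_zero]

theorem linear_dvd_of_degree_lt (hφ : φ.IsHomogeneous 1) (hφ0 : φ ≠ 0) (hf : f.IsHomogeneous d)
    (hT : ∀ P ∈ T, eval P.rep φ = 0) (hfT : ∀ P ∈ T, VanishesToOrder P.rep m f)
    (hd : d < m * T.card) : φ ∣ f :=
  dvd_of_forall_aeval_eq_zero (prime_of_isHomogeneous_one hφ hφ0) fun _ _ _ _ hw =>
    aeval_eq_zero_of_degree_lt hφ hφ0 hf hT hfT hd hw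

theorem linear_pow_dvd_of_degree_lt (hφ : φ.IsHomogeneous 1) (hφ0 : φ ≠ 0)
    (hT : ∀ P ∈ T, eval P.rep φ = 0) (hTne : T.Nonempty) {n : ℕ} (hf : f.IsHomogeneous d)
    (hf0 : f ≠ 0) (hfT : ∀ P ∈ T, VanishesToOrder P.rep (m + n) f)
    (hd : d + 1 < n + (m + 1) * T.card) : φ ^ n ∣ f := by
  induction n generalizing f d with
  | zero => simp
  | succ n ih =>
    have hcard : n ≤ n * T.card := Nat.le_mul_of_pos_right n hTne.card_pos
    obtain ⟨g, rfl⟩ := linear_dvd_of_degree_lt hφ hφ0 hf hT hfT (by linarith)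
    obtain ⟨e, rfl, hg⟩ := exists_isHomogeneous_of_mul hφ hf0 hf
    rw [pow_succ']
    exact mul_dvd_mul_left φ <| ih hg (right_ne_zero_of_mul hf0)
      (fun P hP => (hfT P hP).of_linear_mul hφ hφ0 (hT P hP)) (by linarith)

end Line

section LineConfiguration

variable {k : Type*} [Field k] {t r : ℕ}

/-- A line count configuration: the points of `T i` lie on the line `φ i = 0` and on none of the
other lines `φ j = 0`. The lines are therefore distinct as soon as all the `T i` are nonempty. -/
structure IsLineConfig (T : Fin t → Finset (ℙ k (Fin 3 → k)))
    (φ : Fin t → MvPolynomial (Fin 3) k) : Prop where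
  isHomogeneous : ∀ i, (φ i).IsHomogeneous 1
  ne_zero : ∀ i, φ i ≠ 0
  eval_eq_zero : ∀ i, ∀ P ∈ T i, eval P.rep (φ i) = 0
  eval_ne_zero : ∀ i j, i ≠ j → ∀ P ∈ T j, eval P.rep (φ i) ≠ 0

namespace IsLineConfig

theorem castSucc {T : Fin (t + 1) → Finset (ℙ k (Fin 3 → k))}
    {φ : Fin (t + 1) → MvPolynomial (Fin 3) k} (h : IsLineConfig T φ) :
    IsLineConfig (fun i : Fin t => T i.castSucc) fun i => φ i.castSucc where
  isHomogeneous _ := h.isHomogeneous _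
  ne_zero _ := h.ne_zero _
  eval_eq_zero _ := h.eval_eq_zero _
  eval_ne_zero _ _ hij := h.eval_ne_zero _ _ (Fin.castSucc_injective t |>.ne hij)

theorem le_degree {T : Fin (t + 1) → Finset (ℙ k (Fin 3 → k))}
    {φ : Fin (t + 1) → MvPolynomial (Fin 3) k} (h : IsLineConfig T φ)
    (hcard : ∀ i : Fin (t + 1), (i : ℕ) + 1 ≤ (T i).card) {f : MvPolynomial (Fin 3) k} {d : ℕ}
    (hf : f.IsHomogeneous d) (hf0 : f ≠ 0)
    (hfT : ∀ i, ∀ P ∈ T i, VanishesToOrder P.rep (r + (r + 1)) f) :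
    (r + 1) * (t + 1) + r ≤ d := by
  induction t generalizing f d with
  | zero =>
    obtain ⟨P, hP⟩ := Finset.card_pos.1 (Nat.zero_lt_of_lt (hcard 0))
    linarith [(hfT 0 P hP).le_degree hf hf0]
  | succ t ih =>
    by_contra! hd
    let L := Fin.last (t + 1)
    have hL : t + 2 ≤ (T L).card := hcard L
    have hdvd : φ L ^ (r + 1) ∣ f :=
      linear_pow_dvd_of_degree_lt (h.isHomogeneous L) (h.ne_zero L) (h.eval_eq_zero L)
        (Finset.card_pos.1 (by omega)) hf hf0 (hfT L) (by nlinarith)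
    obtain ⟨g, rfl⟩ := hdvd
    obtain ⟨e, rfl, hg⟩ := exists_isHomogeneous_of_mul ((h.isHomogeneous L).pow (r + 1)) hf0 hf
    have hgT : ∀ i : Fin (t + 1), ∀ P ∈ T i.castSucc, VanishesToOrder P.rep (r + (r + 1)) g :=
      fun i P hP => (hfT _ P hP).of_mul_left <| by
        rw [map_pow]
        exact pow_ne_zero _ (h.eval_ne_zero L _ (Fin.castSucc_lt_last i).ne' P hP)
    linarith [ih h.castSucc (fun i => hcard i.castSucc) hg (right_ne_zero_of_mul hf0) hgT]

end IsLineConfig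

end LineConfiguration

section InitialDegree

variable {k : Type*} [Field k]

theorem alphaDeg_le {I : Ideal (MvPolynomial (Fin 3) k)} {f : MvPolynomial (Fin 3) k} {d : ℕ}
    (hf : f ∈ I) (hf0 : f ≠ 0) (hd : f.IsHomogeneous d) : alphaDeg k I ≤ d :=
  Nat.sInf_le ⟨f, hf, hf0, hd⟩

-- Pitfall: `alphaDeg k ⊥ = sInf ∅ = 0`.
theorem le_alphaDeg {I : Ideal (MvPolynomial (Fin 3) k)} {f : MvPolynomial (Fin 3) k} {d b : ℕ}
    (hf : f ∈ I) (hf0 : f ≠ 0) (hd : f.IsHomogeneous d)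
    (hb : ∀ g ∈ I, g ≠ 0 → ∀ e, g.IsHomogeneous e → b ≤ e) : b ≤ alphaDeg k I := by
  obtain ⟨g, hg, hg0, he⟩ := Nat.sInf_mem
    (s := {d | ∃ f ∈ I, f ≠ 0 ∧ f.IsHomogeneous d}) ⟨d, f, hf, hf0, hd⟩
  exact hb g hg hg0 _ he

theorem pointIdeal_le_ker_eval (P : ℙ k (Fin 3 → k)) :
    pointIdeal k P ≤ RingHom.ker (eval P.rep) := fun f hf =>
  RingHom.mem_ker.2 (by simpa only [one_smul] using hf 1)

theorem mem_pointIdeal_of_isHomogeneous_one {P : ℙ k (Fin 3 → k)} {φ : MvPolynomial (Fin 3) k}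
    (hφ : φ.IsHomogeneous 1) (hP : eval P.rep φ = 0) : φ ∈ pointIdeal k P := fun c => by
  have hsmul := aeval_mul_left_of_isHomogeneous hφ c P.rep
  rw [aeval_eq_eval, aeval_eq_eval, hP, mul_zero] at hsmul
  exact hsmul

theorem mem_fatIdeal {W : Finset (ℙ k (Fin 3 → k))} {m : ℕ} {f : MvPolynomial (Fin 3) k} :
    f ∈ fatIdeal k W m ↔ ∀ P ∈ W, f ∈ pointIdeal k P ^ m := by
  simp only [fatIdeal, Submodule.mem_iInf]

variable {t : ℕ} {W : Finset (ℙ k (Fin 3 → k))} {T : Fin t → Finset (ℙ k (Fin 3 → k))}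
  {φ : Fin t → MvPolynomial (Fin 3) k}

namespace IsLineConfig

theorem prod_pow_mem_fatIdeal (h : IsLineConfig T φ) (hW : ∀ P ∈ W, ∃ i, P ∈ T i) (m : ℕ) :
    (∏ i, φ i) ^ m ∈ fatIdeal k W m := by
  refine mem_fatIdeal.2 fun P hP => Ideal.pow_mem_pow ?_ m
  obtain ⟨i, hi⟩ := hW P hP
  exact Ideal.mem_of_dvd _ (Finset.dvd_prod_of_mem φ (Finset.mem_univ i))
    (mem_pointIdeal_of_isHomogeneous_one (h.isHomogeneous i) (h.eval_eq_zero i P hi))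

theorem isHomogeneous_prod_pow (h : IsLineConfig T φ) (m : ℕ) :
    ((∏ i, φ i) ^ m).IsHomogeneous (t * m) := by
  simpa using (IsHomogeneous.prod Finset.univ φ _ fun i _ => h.isHomogeneous i).pow m

theorem prod_pow_ne_zero (h : IsLineConfig T φ) (m : ℕ) : (∏ i, φ i) ^ m ≠ 0 :=
  pow_ne_zero m (Finset.prod_ne_zero_iff.2 fun i _ => h.ne_zero i)

theorem alphaDeg_fatIdeal_one_le (h : IsLineConfig T φ) (hW : ∀ P ∈ W, ∃ i, P ∈ T i) :
    alphaDeg k (fatIdeal k W 1) ≤ t :=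
  alphaDeg_le (h.prod_pow_mem_fatIdeal hW 1) (h.prod_pow_ne_zero 1)
    (by simpa using h.isHomogeneous_prod_pow 1)

end IsLineConfig

end InitialDegree

theorem stmt18_general {k : Type*} [Field k] {t : ℕ} (ht : 0 < t)
    {W : Finset (ℙ k (Fin 3 → k))} {T : Fin t → Finset (ℙ k (Fin 3 → k))}
    {φ : Fin t → MvPolynomial (Fin 3) k} (h : IsLineConfig T φ)
    (hW : ∀ P, P ∈ W ↔ ∃ i, P ∈ T i) (hcard : ∀ i : Fin t, (i : ℕ) + 1 ≤ (T i).card)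
    {r : ℕ} (hr : 1 ≤ r) :
    r * alphaDeg k (fatIdeal k W 1) + (r - 1) ≤ alphaDeg k (fatIdeal k W (2 * r - 1)) := by
  obtain ⟨t, rfl⟩ := Nat.exists_eq_add_one.2 ht
  obtain ⟨r, rfl⟩ := Nat.exists_eq_add_of_le' hr
  have hm : 2 * (r + 1) - 1 = r + (r + 1) := by omega
  have hWT : ∀ P ∈ W, ∃ i, P ∈ T i := fun P => (hW P).1
  rw [hm, Nat.add_sub_cancel]
  calc (r + 1) * alphaDeg k (fatIdeal k W 1) + r ≤ (r + 1) * (t + 1) + r := by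
        gcongr
        exact h.alphaDeg_fatIdeal_one_le hWT
    _ ≤ alphaDeg k (fatIdeal k W (r + (r + 1))) :=
      le_alphaDeg (h.prod_pow_mem_fatIdeal hWT _) (h.prod_pow_ne_zero _)
        (h.isHomogeneous_prod_pow _) fun f hfW hf0 d hf =>
          h.le_degree hcard hf hf0 fun i P hP => vanishesToOrder_of_mem_pow
            (pointIdeal_le_ker_eval P) (mem_fatIdeal.1 hfW P ((hW P).2 ⟨i, hP⟩))

end FatPoints

theorem stmt18 (k : Type*) [Field k] [IsAlgClosed k] [CharZero k]
    (t : ℕ) (ht : 0 < t)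
    (c : Fin t → ℕ) (hc1 : ∀ i, 1 ≤ c i) (hcmono : Monotone c)
    (hci : ∀ i : Fin t, (i : ℕ) + 1 ≤ c i)
    (W : Finset (ℙ k (Fin 3 → k)))
    (T : Fin t → Finset (ℙ k (Fin 3 → k)))
    (φ : Fin t → MvPolynomial (Fin 3) k)
    (hhom : ∀ i, (φ i).IsHomogeneous 1)
    (hne : ∀ i, φ i ≠ 0)
    (hprop : ∀ i j, i ≠ j → ∀ a : k, φ i ≠ a • φ j)
    (hW : ∀ P, P ∈ W ↔ ∃ i, P ∈ T i)
    (hcard : ∀ i : Fin t, (T i).card = c i)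
    (honline : ∀ i, ∀ P ∈ T i, MvPolynomial.eval (Projectivization.rep P) (φ i) = 0)
    (hone : ∀ P ∈ W, ∀ i j : Fin t, i ≠ j →
      ¬(MvPolynomial.eval (Projectivization.rep P) (φ i) = 0 ∧
        MvPolynomial.eval (Projectivization.rep P) (φ j) = 0))
    (r : ℕ) (hr : 1 ≤ r) :
    r * alphaDeg k (fatIdeal k W 1) + (r - 1) ≤ alphaDeg k (fatIdeal k W (2 * r - 1)) := by
  have hconfig : IsLineConfig T φ := ⟨hhom, hne, honline, fun i j hij P hP hi =>
    hone P ((hW P).2 ⟨j, hP⟩) i j hij ⟨hi, honline j P hP⟩⟩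
  exact stmt18_general ht hconfig hW (fun i => (hci i).trans_eq (hcard i).symm) hr
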